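/- Let A be a Hadamard matrix of order h ≥ 4, let d ≥ 1, and for each B ∈ {−1,1}^{h×d} define C by c_{ij} = sgn((AᵀB)_{ji}) and F = C A⁻¹ B. Then, averaging over all 2^{hd} equally likely choices of B, E[f_{ij}²] = 1 for every pair i ≠ j with 1 ≤ i, j ≤ d. -/

import Mathlib

open Matrix

/-- The `±1` sign function: `sgn x = 1` if `x ≥ 0`, `−1` if `x < 0`. -/
noncomputable def sgn (x : ℝ) : ℝ := if 0 ≤ x then 1 else -1

/-- The `h × d` sign matrix corresponding to a Boolean matrix `b`. -/
noncomputable def signMat {h d : ℕ} (b : Fin h → Fin d → Bool) :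
    Matrix (Fin h) (Fin d) ℝ :=
  Matrix.of fun i j => if b i j then (1 : ℝ) else -1

/-- The matrix `C` with `c_{ij} = sgn((Aᵀ B)_{ji})`. -/
noncomputable def Cmat {h d : ℕ} (A : Matrix (Fin h) (Fin h) ℝ)
    (B : Matrix (Fin h) (Fin d) ℝ) : Matrix (Fin d) (Fin h) ℝ :=
  Matrix.of fun i j => sgn ((Aᵀ * B) j i)

/-- The matrix `F = C A⁻¹ B`. -/
noncomputable def Fmat {h d : ℕ} (A : Matrix (Fin h) (Fin h) ℝ)
    (B : Matrix (Fin h) (Fin d) ℝ) : Matrix (Fin d) (Fin d) ℝ :=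
  Cmat A B * A⁻¹ * B

/-- Expectation of `f(B)`, averaged over the `2^(h·d)` equally likely
`h × d` matrices `B` with entries in `{−1, 1}`. -/
noncomputable def expec (h d : ℕ) (f : Matrix (Fin h) (Fin d) ℝ → ℝ) : ℝ :=
  (∑ b : Fin h → Fin d → Bool, f (signMat b)) / 2 ^ (h * d)

/-!
For `i ≠ j` the `i`-th row of `C A⁻¹` depends only on the `i`-th column of `B`, so `f_{ij}` is the
pairing of that row with an independent column of random signs. Conditioning on the row, the
cross terms of `f_{ij}²` average to zero, since negating one sign of the `j`-th column preserves
the distribution, and `E[f_{ij}²]` is the mean squared length of the row. As `A / √c` is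
orthogonal when `Aᵀ A = c I`, and the row of `C` has `h` entries `±1`, that squared length is
always `h / c`.
-/

section Expectation

variable {h d : ℕ} {f g : Matrix (Fin h) (Fin d) ℝ → ℝ}

theorem signMat_mul_self (b : Fin h → Fin d → Bool) (k : Fin h) (j : Fin d) :
    signMat b k j * signMat b k j = 1 := by
  cases hb : b k j <;> simp [signMat, hb]

theorem expec_congr (hfg : ∀ b, f (signMat b) = g (signMat b)) : expec h d f = expec h d g := by
  simp only [expec, hfg]

theorem expec_const (c : ℝ) : expec h d (fun _ => c) = c := by
  simp [expec, ← pow_mul, mul_comm d h]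

theorem expec_neg : expec h d (fun B => -f B) = -expec h d f := by
  simp only [expec, Finset.sum_neg_distrib, neg_div]

theorem expec_sum {ι : Type*} (s : Finset ι) (F : ι → Matrix (Fin h) (Fin d) ℝ → ℝ) :
    expec h d (fun B => ∑ a ∈ s, F a B) = ∑ a ∈ s, expec h d (F a) := by
  simp only [expec, Finset.sum_div]
  exact Finset.sum_comm

/-- The matrix `B` with its entry at `(k, j)` negated. It is written as a column update so that
functions insensitive to column `j` are visibly insensitive to it. -/
def negEntry (k : Fin h) (j : Fin d) (B : Matrix (Fin h) (Fin d) ℝ) : Matrix (Fin h) (Fin d) ℝ :=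
  B.updateCol j (Function.update (B.col j) k (-B k j))

theorem negEntry_apply_self (k : Fin h) (j : Fin d) (B : Matrix (Fin h) (Fin d) ℝ) :
    negEntry k j B k j = -B k j := by
  simp [negEntry]

theorem negEntry_apply_of_ne {k l : Fin h} (hlk : l ≠ k) (j : Fin d)
    (B : Matrix (Fin h) (Fin d) ℝ) : negEntry k j B l j = B l j := by
  simp [negEntry, hlk]

/-- The counterpart of `negEntry` on the Boolean matrices indexing the sign matrices. -/
def flipEntry (k : Fin h) (j : Fin d) (b : Fin h → Fin d → Bool) : Fin h → Fin d → Bool :=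
  Function.update b k (Function.update (b k) j (!b k j))

theorem flipEntry_involutive (k : Fin h) (j : Fin d) : Function.Involutive (flipEntry k j) := by
  intro b
  simp [flipEntry]

theorem signMat_flipEntry (k : Fin h) (j : Fin d) (b : Fin h → Fin d → Bool) :
    signMat (flipEntry k j b) = negEntry k j (signMat b) := by
  ext l m
  by_cases hl : l = k <;> by_cases hm : m = j <;> cases hb : b k j <;>
    simp [signMat, flipEntry, negEntry, hl, hm, hb]

theorem expec_comp_negEntry (k : Fin h) (j : Fin d) :
    expec h d (fun B => f (negEntry k j B)) = expec h d f := by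
  simp only [expec, ← signMat_flipEntry]
  congr 1
  exact (flipEntry_involutive k j).bijective.sum_comp (fun b => f (signMat b))

theorem expec_eq_zero_of_negEntry {k : Fin h} {j : Fin d}
    (hf : ∀ B, f (negEntry k j B) = -f B) : expec h d f = 0 := by
  have hneg : expec h d f = -expec h d f := by
    rw [← expec_neg, ← expec_comp_negEntry k j]
    simp only [hf]
  linarith

theorem expec_mul_entry_mul_entry {j : Fin d} (hf : ∀ B v, f (B.updateCol j v) = f B)
    (k l : Fin h) :
    expec h d (fun B => f B * (B k j * B l j)) = if k = l then expec h d f else 0 := by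
  split_ifs with hkl
  · subst hkl
    exact expec_congr fun b => by rw [signMat_mul_self, mul_one]
  · refine expec_eq_zero_of_negEntry (k := k) (j := j) fun B => ?_
    rw [negEntry_apply_self, negEntry_apply_of_ne (Ne.symm hkl), negEntry, hf]
    ring

theorem expec_dotProduct_col_sq {j : Fin d} {w : Matrix (Fin h) (Fin d) ℝ → Fin h → ℝ}
    (hw : ∀ B v, w (B.updateCol j v) = w B) :
    expec h d (fun B => (w B ⬝ᵥ B.col j) ^ 2) = expec h d (fun B => w B ⬝ᵥ w B) := by
  calc expec h d (fun B => (w B ⬝ᵥ B.col j) ^ 2)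
      = expec h d (fun B => ∑ k, ∑ l, w B k * w B l * (B k j * B l j)) := by
        simp only [dotProduct, sq, Finset.sum_mul_sum, Matrix.col_apply, mul_mul_mul_comm]
    _ = ∑ k, ∑ l, expec h d (fun B => w B k * w B l * (B k j * B l j)) := by
        simp only [expec_sum]
    _ = ∑ k, expec h d (fun B => w B k * w B k) := by
        have horth (k l : Fin h) := expec_mul_entry_mul_entry (f := fun B => w B k * w B l)
          (fun B v => by rw [hw]) k l
        simp only [horth, Finset.sum_ite_eq, Finset.mem_univ, if_true]
    _ = expec h d (fun B => w B ⬝ᵥ w B) := (expec_sum _ _).symm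

end Expectation

section ScaledOrthogonal

variable {n K : Type*} [Fintype n] [DecidableEq n] [Field K] {A : Matrix n n K} {c : K}

theorem inv_mul_transpose_inv_of_transpose_mul_self (hc : c ≠ 0) (hA : Aᵀ * A = c • 1) :
    A⁻¹ * A⁻¹ᵀ = c⁻¹ • 1 := by
  rw [Matrix.transpose_nonsing_inv, ← Matrix.mul_inv_rev, hA]
  exact Matrix.inv_eq_left_inv (by simp [smul_smul, hc])

theorem vecMul_inv_dotProduct_self (hc : c ≠ 0) (hA : Aᵀ * A = c • 1) (v : n → K) :
    (v ᵥ* A⁻¹) ⬝ᵥ (v ᵥ* A⁻¹) = (v ⬝ᵥ v) / c := by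
  calc (v ᵥ* A⁻¹) ⬝ᵥ (v ᵥ* A⁻¹) = v ⬝ᵥ (A⁻¹ * A⁻¹ᵀ) *ᵥ v := by
        rw [← Matrix.dotProduct_mulVec, ← Matrix.mulVec_transpose, Matrix.mulVec_mulVec]
    _ = (v ⬝ᵥ v) / c := by
        rw [inv_mul_transpose_inv_of_transpose_mul_self hc hA, Matrix.smul_mulVec,
          Matrix.one_mulVec, dotProduct_smul, smul_eq_mul, inv_mul_eq_div]

end ScaledOrthogonal

section SignRows

variable {h d : ℕ} (A : Matrix (Fin h) (Fin h) ℝ) (B : Matrix (Fin h) (Fin d) ℝ)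

theorem sgn_mul_self (x : ℝ) : sgn x * sgn x = 1 := by
  unfold sgn
  split_ifs <;> norm_num

theorem Cmat_row_dotProduct_self (i : Fin d) : (Cmat A B).row i ⬝ᵥ (Cmat A B).row i = h := by
  simp [dotProduct, Cmat, sgn_mul_self]

theorem Cmat_updateCol_row {i j : Fin d} (hij : i ≠ j) (v : Fin h → ℝ) :
    (Cmat A (B.updateCol j v)).row i = (Cmat A B).row i := by
  ext l
  simp [Cmat, Matrix.mul_apply, hij]

theorem Fmat_apply_eq_dotProduct (i j : Fin d) :
    Fmat A B i j = ((Cmat A B).row i ᵥ* A⁻¹) ⬝ᵥ B.col j :=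
  rfl

end SignRows

theorem expec_F_offdiag_sq_general {h d : ℕ} {A : Matrix (Fin h) (Fin h) ℝ} {c : ℝ} (hc : c ≠ 0)
    (hA : Aᵀ * A = c • 1) {i j : Fin d} (hij : i ≠ j) :
    expec h d (fun B => (Fmat A B i j) ^ 2) = h / c := by
  have hrow (B : Matrix (Fin h) (Fin d) ℝ) (v : Fin h → ℝ) :
      (Cmat A (B.updateCol j v)).row i ᵥ* A⁻¹ = (Cmat A B).row i ᵥ* A⁻¹ := by
    rw [Cmat_updateCol_row A B hij]
  simp only [Fmat_apply_eq_dotProduct]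
  rw [expec_dotProduct_col_sq hrow]
  simp only [vecMul_inv_dotProduct_self hc hA, Cmat_row_dotProduct_self, expec_const]

/-- Let `A` be a Hadamard matrix of order `h ≥ 4`, `d ≥ 1`, and for each
`B ∈ {−1,1}^{h×d}` set `C = sgn(AᵀB)ᵀ` and `F = C A⁻¹ B`.  Then, averaging
over all `2^{hd}` equally likely choices of `B`, `E[f_{ij}²] = 1` for every
pair `i ≠ j`. -/
theorem expec_F_offdiag_sq (h d : ℕ) (h4 : 4 ∣ h) (hh : 4 ≤ h) (hd : 1 ≤ d)
    (A : Matrix (Fin h) (Fin h) ℝ)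
    (hA1 : ∀ i j, A i j = 1 ∨ A i j = -1)
    (hA2 : Aᵀ * A = (h : ℝ) • 1) :
    ∀ i j : Fin d, i ≠ j →
      expec h d (fun B => (Fmat A B i j) ^ 2) = 1 := by
  intro i j hij
  have h_ne_zero : (h : ℝ) ≠ 0 := Nat.cast_ne_zero.mpr (by omega)
  rw [expec_F_offdiag_sq_general h_ne_zero hA2 hij, div_self h_ne_zero]
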